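/- arXiv:2307.07827 — 3 statements merged into one kernel-verified Lean document; each statement's English description precedes it below -/
import Mathlib

section
/- Let H be a real separable Hilbert space with its Borel σ-algebra, and let μ and ν be Borel probability measures on H whose identity maps are Bochner integrable, with Bochner means m_μ = ∫ x dμ(x) and m_ν = ∫ x dν(x). Let v_1, …, v_q ∈ H be such that m_μ − m_ν lies in the linear span of {v_1, …, v_q}, and assume that μ ≠ ν implies m_μ ≠ m_ν. Define the continuous linear map T : H → ℝ^q by T(x) = (⟨v_1, x⟩, …, ⟨v_q, x⟩). Then the pushforward measures satisfy: μ.map T = ν.map T if and only if μ = ν. (Theorem 1: the dimension-reduced sequence has the same locations of distributional changes as the original sequence.) -/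
open RealInnerProductSpace MeasureTheory

/-- Theorem 1: if the difference of the kernel mean elements of `μ` and `ν` lies in the
span of `v 1, …, v q`, and distributional changes are detectable through the mean elements
(characteristic-kernel property), then the pushforwards of `μ` and `ν` under the
dimension-reduction map `T x = (⟪v 1, x⟫, …, ⟪v q, x⟫)` coincide iff `μ = ν`. -/
theorem stmt1 {H : Type*} [NormedAddCommGroup H] [InnerProductSpace ℝ H]
    [CompleteSpace H] [SecondCountableTopology H] [MeasurableSpace H] [BorelSpace H]
    {q : ℕ} (μ ν : Measure H) [IsProbabilityMeasure μ] [IsProbabilityMeasure ν]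
    (hμ : Integrable (id : H → H) μ) (hν : Integrable (id : H → H) ν)
    (v : Fin q → H)
    (hspan : (∫ x, x ∂μ) - (∫ x, x ∂ν) ∈ Submodule.span ℝ (Set.range v))
    (hchar : μ ≠ ν → (∫ x, x ∂μ) ≠ (∫ x, x ∂ν))
    (T : H → (Fin q → ℝ)) (hT : ∀ x, T x = fun k => ⟪v k, x⟫) :
    μ.map T = ν.map T ↔ μ = ν := by
  refine ⟨fun h => ?_, fun h => by rw [h]⟩
  by_contra hne
  apply hchar hne
  have hTm : Measurable T := by
    have : T = fun x => fun k => ⟪v k, x⟫ := funext hT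
    rw [this]
    exact measurable_pi_lambda _ fun k => (continuous_const.inner continuous_id).measurable
  have key : ∀ k, ⟪v k, (∫ x, x ∂μ) - (∫ x, x ∂ν)⟫ = 0 := by
    intro k
    have e : ∀ ρ : Measure H, Integrable (id : H → H) ρ →
        ⟪v k, ∫ x, x ∂ρ⟫ = ∫ y, y k ∂(ρ.map T) := by
      intro ρ hρ
      rw [integral_map hTm.aemeasurable (measurable_pi_apply k).aestronglyMeasurable]
      simp only [hT]
      exact (integral_inner hρ (v k)).symm
    rw [inner_sub_right, e μ hμ, e ν hν, h, sub_self]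
  have all : ∀ w ∈ Submodule.span ℝ (Set.range v),
      ⟪w, (∫ x, x ∂μ) - (∫ x, x ∂ν)⟫ = 0 := by
    intro w hw
    induction hw using Submodule.span_induction with
    | mem x hx => obtain ⟨k, rfl⟩ := hx; exact key k
    | zero => exact inner_zero_left _
    | add x y _ _ hx hy => rw [inner_add_left, hx, hy, add_zero]
    | smul a x _ hx => rw [real_inner_smul_left, hx, mul_zero]
  exact sub_eq_zero.mp (inner_self_eq_zero.mp (all _ hspan))
end

section
/- Given a real inner product space H, vectors μ_0, …, μ_s ∈ H and positive weights c_0, …, c_s, let the corrected operator Δ be defined by Δh = Σ_{i,j=0}^{s} c_i c_j ⟨μ_i − μ_j, h⟩ (μ_i − μ_j). Then the linear span of the set of eigenvectors of Δ associated with nonzero eigenvalues, i.e. the span of {v ∈ H : ∃ λ ≠ 0, Δv = λv}, equals the linear span of {μ_i − μ_j : 0 ≤ i, j ≤ s}. (Theorem 2, second part: the eigenfunctions of Δ^kernel associated with its nonzero eigenvalues span the central distribution deviation subspace.) -/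
open RealInnerProductSpace

/-- Theorem 2, second part: the eigenvectors of the corrected operator `Δ^kernel`
associated with nonzero eigenvalues span the central distribution deviation subspace
`span {μ i - μ j}`. -/
theorem stmt6 {H : Type*} [NormedAddCommGroup H] [InnerProductSpace ℝ H]
    {s : ℕ} (μ : Fin (s + 1) → H) (c : Fin (s + 1) → ℝ) (hc : ∀ i, 0 < c i)
    (Δ : H → H)
    (hΔ : ∀ h, Δ h = ∑ i : Fin (s + 1), ∑ j : Fin (s + 1),
      (c i * c j * ⟪μ i - μ j, h⟫) • (μ i - μ j)) :
    Submodule.span ℝ {v : H | ∃ lam : ℝ, lam ≠ 0 ∧ Δ v = lam • v}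
      = Submodule.span ℝ {x : H | ∃ i j : Fin (s + 1), x = μ i - μ j} := by
  set W := Submodule.span ℝ {x : H | ∃ i j : Fin (s + 1), x = μ i - μ j} with hW
  have hmem : ∀ i j, μ i - μ j ∈ W := fun i j => Submodule.subset_span ⟨i, j, rfl⟩
  have hΔW : ∀ h, Δ h ∈ W := by
    intro h
    rw [hΔ]
    exact Submodule.sum_mem _ fun i _ => Submodule.sum_mem _ fun j _ =>
      Submodule.smul_mem _ _ (hmem i j)
  have hfin : FiniteDimensional ℝ W := by
    apply FiniteDimensional.span_of_finite
    refine (Set.finite_range (fun p : Fin (s+1) × Fin (s+1) => μ p.1 - μ p.2)).subset ?_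
    rintro x ⟨i, j, rfl⟩
    exact ⟨(i, j), rfl⟩
  have hinner : ∀ x y : H, ⟪Δ x, y⟫ = ∑ i : Fin (s + 1), ∑ j : Fin (s + 1),
      c i * c j * ⟪μ i - μ j, x⟫ * ⟪μ i - μ j, y⟫ := by
    intro x y
    rw [hΔ]
    simp only [sum_inner, real_inner_smul_left]
  let T : W →ₗ[ℝ] W :=
    { toFun := fun x => ⟨Δ x, hΔW x⟩
      map_add' := by
        intro x y
        apply Subtype.ext
        simp only [hΔ, Submodule.coe_add, inner_add_right, mul_add, add_smul,
          Finset.sum_add_distrib]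
      map_smul' := by
        intro r x
        apply Subtype.ext
        simp only [hΔ, Submodule.coe_smul, real_inner_smul_right, RingHom.id_apply,
          Finset.smul_sum, smul_smul]
        refine Finset.sum_congr rfl fun i _ => Finset.sum_congr rfl fun j _ => ?_
        congr 1
        ring }
  have hTc : ∀ x : W, ((T x : W) : H) = Δ x := fun x => rfl
  have hT : T.IsSymmetric := by
    intro x y
    rw [Submodule.coe_inner, Submodule.coe_inner, hTc, hTc, hinner, real_inner_comm, hinner]
    refine Finset.sum_congr rfl fun i _ => Finset.sum_congr rfl fun j _ => ?_
    ring
  have hker : ∀ x ∈ W, Δ x = 0 → x = 0 := by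
    intro x hx h0
    have h1 := hinner x x
    rw [h0, inner_zero_left] at h1
    have hnn : ∀ i j, 0 ≤ c i * c j * ⟪μ i - μ j, x⟫ * ⟪μ i - μ j, x⟫ := by
      intro i j
      rw [mul_assoc]
      exact mul_nonneg (mul_pos (hc i) (hc j)).le (mul_self_nonneg _)
    have h2 : ∀ i j, ⟪μ i - μ j, x⟫ = 0 := by
      intro i j
      have h3 := (Finset.sum_eq_zero_iff_of_nonneg
        (fun i _ => Finset.sum_nonneg fun j _ => hnn i j)).1 h1.symm i (Finset.mem_univ _)
      have h4 := (Finset.sum_eq_zero_iff_of_nonneg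
        (fun j _ => hnn i j)).1 h3 j (Finset.mem_univ _)
      rw [mul_assoc] at h4
      exact mul_self_eq_zero.1 ((mul_eq_zero.1 h4).resolve_left (mul_pos (hc i) (hc j)).ne')
    have h5 : ∀ y ∈ W, ⟪y, x⟫ = 0 := by
      intro y hy
      induction hy using Submodule.span_induction with
      | mem y hy => obtain ⟨i, j, rfl⟩ := hy; exact h2 i j
      | zero => exact inner_zero_left _
      | add a b _ _ ha hb => rw [inner_add_left, ha, hb, add_zero]
      | smul r a _ ha => rw [real_inner_smul_left, ha, mul_zero]
    exact inner_self_eq_zero.1 (h5 x hx)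
  apply le_antisymm
  · rw [Submodule.span_le]
    rintro v ⟨lam, hl, hv⟩
    have : v = lam⁻¹ • Δ v := by rw [hv, smul_smul, inv_mul_cancel₀ hl, one_smul]
    rw [this]
    exact W.smul_mem _ (hΔW v)
  · intro x hx
    let b := hT.eigenvectorBasis rfl
    have hb : ∀ k, ((b k : W) : H) ∈
        Submodule.span ℝ {v : H | ∃ lam : ℝ, lam ≠ 0 ∧ Δ v = lam • v} := by
      intro k
      have he : Δ (b k : W) = hT.eigenvalues rfl k • ((b k : W) : H) := by
        have := congrArg (Subtype.val) (hT.apply_eigenvectorBasis rfl k)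
        exact this
      refine Submodule.subset_span ⟨hT.eigenvalues rfl k, ?_, he⟩
      intro h0
      rw [h0, zero_smul] at he
      have h1 := hker _ (b k).2 he
      exact b.orthonormal.ne_zero k (Subtype.ext h1)
    have hs := congrArg (Subtype.val) (b.sum_repr ⟨x, hx⟩)
    rw [← show _ = x from hs]
    rw [Submodule.coe_sum]
    exact Submodule.sum_mem _ fun k _ => Submodule.smul_mem _ _ (hb k)
end

section
/- Let q, n ∈ ℕ with 1 ≤ q ≤ n−1, let λ_1 ≥ λ_2 ≥ … ≥ λ_n ≥ 0 be reals with λ_q > 0 and λ_k = 0 for all k > q, and let λ̂_1, …, λ̂_n ≥ 0 be reals with |λ̂_k − λ_k| ≤ η for all k, for some η ≥ 0. Let τ ∈ (0,1) and c > 0 satisfy η + c ≤ τ(λ_q − η + c) and η(1+τ) < c(1−τ). Then the thresholding ridge ratio estimator q̂ = max{k ∈ {1, …, n−1} : (λ̂_{k+1} + c)/(λ̂_k + c) ≤ τ} is well defined and equals q. (Deterministic core of Theorem 4: consistency of the TRR estimator of the structural dimension.) -/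
/-- Deterministic core of Theorem 4: consistency of the thresholding ridge ratio (TRR)
estimator of the structural dimension. Eigenvalues are indexed by `1, …, n`. -/
theorem stmt10 {q n : ℕ} (hq1 : 1 ≤ q) (hq2 : q ≤ n - 1) (hn : 2 ≤ n)
    (lam hatlam : ℕ → ℝ) {η : ℝ} (hη : 0 ≤ η)
    (hmono : ∀ k l, 1 ≤ k → k ≤ l → l ≤ n → lam l ≤ lam k)
    (hnn : ∀ k, 1 ≤ k → k ≤ n → 0 ≤ lam k)
    (hposq : 0 < lam q)
    (hzero : ∀ k, q < k → k ≤ n → lam k = 0)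
    (hhatnn : ∀ k, 1 ≤ k → k ≤ n → 0 ≤ hatlam k)
    (hclose : ∀ k, 1 ≤ k → k ≤ n → |hatlam k - lam k| ≤ η)
    {τ c : ℝ} (hτ0 : 0 < τ) (hτ1 : τ < 1) (hc : 0 < c)
    (hgap : η + c ≤ τ * (lam q - η + c))
    (hsep : η * (1 + τ) < c * (1 - τ)) :
    ((Finset.Icc 1 (n - 1)).filter
        (fun k => (hatlam (k + 1) + c) / (hatlam k + c) ≤ τ)).Nonempty ∧
    ((Finset.Icc 1 (n - 1)).filter
        (fun k => (hatlam (k + 1) + c) / (hatlam k + c) ≤ τ)).max = (q : WithBot ℕ) := by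
  have hmem : q ∈ (Finset.Icc 1 (n - 1)).filter
      (fun k => (hatlam (k + 1) + c) / (hatlam k + c) ≤ τ) := by
    rw [Finset.mem_filter, Finset.mem_Icc]
    refine ⟨⟨hq1, hq2⟩, ?_⟩
    have h0 := hhatnn q hq1 (by omega)
    have h1 := (abs_le.mp (hclose q hq1 (by omega))).1
    have h2 := (abs_le.mp (hclose (q + 1) (by omega) (by omega))).2
    rw [hzero (q + 1) (by omega) (by omega)] at h2
    rw [div_le_iff₀ (by linarith)]
    have h3 : τ * (lam q - η + c) ≤ τ * (hatlam q + c) :=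
      mul_le_mul_of_nonneg_left (by linarith) hτ0.le
    linarith
  refine ⟨⟨q, hmem⟩, le_antisymm ?_ (Finset.le_max hmem)⟩
  refine Finset.max_le ?_
  intro k hk
  rw [Finset.mem_filter, Finset.mem_Icc] at hk
  obtain ⟨⟨hk1, hk2⟩, hk3⟩ := hk
  suffices hkq : k ≤ q from WithBot.coe_le_coe.mpr hkq
  by_contra hlt
  have h0 := hhatnn k hk1 (by omega)
  have h1 := (abs_le.mp (hclose k hk1 (by omega))).2
  have h2 := hhatnn (k + 1) (by omega) (by omega)
  rw [hzero k (by omega) (by omega)] at h1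
  rw [div_le_iff₀ (by linarith)] at hk3
  have h3 : τ * (hatlam k + c) ≤ τ * (η + c) :=
    mul_le_mul_of_nonneg_left (by linarith) hτ0.le
  nlinarith
end
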